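/- If a mechanism K on a finite set X is OptQL(π, d, d_Q) — that is, K satisfies d-privacy and QL(K, π, d_Q) ≤ QL(K', π, d_Q) for every mechanism K' satisfying d-privacy — then AdvError(K, π, d_Q) = QL(K, π, d_Q); i.e., the adversary cannot reduce the expected error below the quality loss by any remapping, so the identity remapping is optimal. -/

import Mathlib

variable {X : Type*}

/-- A mechanism on a finite set `X`: a row-stochastic matrix. -/
def IsMechanism [Fintype X] (K : X → X → ℝ) : Prop :=
  (∀ x z, 0 ≤ K x z) ∧ ∀ x, ∑ z, K x z = 1

/-- `K` satisfies `d`-privacy. -/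
def DPrivate (d : X → X → ℝ) (K : X → X → ℝ) : Prop :=
  ∀ x x' z, K x z ≤ Real.exp (d x x') * K x' z

/-- A prior distribution on `X`. -/
def IsPrior [Fintype X] (pr : X → ℝ) : Prop :=
  (∀ x, 0 ≤ pr x) ∧ ∑ x, pr x = 1

/-- Quality loss of mechanism `K` under prior `pr` and metric `d`. -/
def QL [Fintype X] (K : X → X → ℝ) (pr : X → ℝ) (d : X → X → ℝ) : ℝ :=
  ∑ x, ∑ z, pr x * K x z * d x z

/-- Composition (matrix product) of a mechanism with a remapping. -/
def comp [Fintype X] (K H : X → X → ℝ) : X → X → ℝ :=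
  fun x x' => ∑ z, K x z * H z x'

/-- Adversary's expected error: infimum of quality loss over all remappings. -/
noncomputable def AdvError [Fintype X] (K : X → X → ℝ) (pr : X → ℝ) (d : X → X → ℝ) : ℝ :=
  sInf {q | ∃ H, IsMechanism H ∧ QL (comp K H) pr d = q}

/-- `K` is d-private with minimal quality loss among d-private mechanisms. -/
def OptQL [Fintype X] (pr : X → ℝ) (d dQ : X → X → ℝ) (K : X → X → ℝ) : Prop :=
  IsMechanism K ∧ DPrivate d K ∧
    ∀ K', IsMechanism K' → DPrivate d K' → QL K pr dQ ≤ QL K' pr dQ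

/-- `K` has quality loss at most `q` and maximal adversary error among such mechanisms. -/
def OptPriv [Fintype X] (pr : X → ℝ) (dA dQ : X → X → ℝ) (q : ℝ) (K : X → X → ℝ) : Prop :=
  QL K pr dQ ≤ q ∧
    ∀ K', IsMechanism K' → QL K' pr dQ ≤ q → AdvError K' pr dA ≤ AdvError K pr dA

/-- A walk in the graph with edge relation `E` from `x` to `x'`. -/
def IsWalk (E : X → X → Prop) (x x' : X) (p : List X) : Prop :=
  p.head? = some x ∧ p.getLast? = some x' ∧ p.Chain' E

/-- The total weight of a walk. -/
def walkWeight (w : X → X → ℝ) (p : List X) : ℝ :=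
  ((p.zip p.tail).map fun e => w e.1 e.2).sum

/-- Shortest-path distance induced by a weighted graph. -/
noncomputable def graphDist (E : X → X → Prop) (w : X → X → ℝ) (x x' : X) : ℝ :=
  sInf {c | ∃ p : List X, IsWalk E x x' p ∧ walkWeight w p = c}

/-! Remapping is post-processing: it turns a `d`-private mechanism into another one. So each
remapped mechanism `KH` competes with the optimal `K` and loses at least as much quality, while the
identity remapping attains the loss of `K`. The infimum defining the adversary error is
therefore a minimum, attained at the identity. -/

section

variable [Fintype X] {d dQ K H : X → X → ℝ} {w : X → ℝ}

theorem isMechanism_iff_of_mem_rowStochastic [DecidableEq X] :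
    IsMechanism K ↔ Matrix.of K ∈ Matrix.rowStochastic ℝ X :=
  Matrix.mem_rowStochastic_iff_sum.symm

theorem IsMechanism.comp (hK : IsMechanism K) (hH : IsMechanism H) :
    IsMechanism (_root_.comp K H) := by
  classical
  rw [isMechanism_iff_of_mem_rowStochastic] at hK hH ⊢
  exact mul_mem hK hH

theorem DPrivate.comp (hK : DPrivate d K) (hH : ∀ y z, 0 ≤ H y z) :
    DPrivate d (_root_.comp K H) := fun x x' z =>
  calc
    ∑ y, K x y * H y z ≤ ∑ y, Real.exp (d x x') * K x' y * H y z :=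
      Finset.sum_le_sum fun y _ => mul_le_mul_of_nonneg_right (hK x x' y) (hH y z)
    _ = Real.exp (d x x') * ∑ y, K x' y * H y z := by
      simp only [mul_assoc, Finset.mul_sum]

theorem isMechanism_single [DecidableEq X] :
    IsMechanism fun x : X => Pi.single x (1 : ℝ) :=
  ⟨fun x => (single_mem_stdSimplex ℝ x).1, fun x => (single_mem_stdSimplex ℝ x).2⟩

theorem comp_single [DecidableEq X] (K : X → X → ℝ) :
    comp K (fun x => Pi.single x 1) = K := by
  ext x z
  simp [comp, Pi.single_apply]

theorem advError_eq_QL_of_forall_QL_le_QL_comp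
    (hK : ∀ H, IsMechanism H → QL K w dQ ≤ QL (comp K H) w dQ) :
    AdvError K w dQ = QL K w dQ := by
  classical
  have attained : ∃ H, IsMechanism H ∧ QL (comp K H) w dQ = QL K w dQ :=
    ⟨_, isMechanism_single, congrArg (QL · w dQ) (comp_single K)⟩
  refine IsLeast.csInf_eq ⟨attained, ?_⟩
  rintro _ ⟨H, hH, rfl⟩
  exact hK H hH

theorem optQL_advError_eq_QL_general {S : Set (X → X → ℝ)}
    (hS : ∀ K ∈ S, ∀ H, IsMechanism H → comp K H ∈ S)
    (hK : K ∈ S) (hmin : IsMinOn (QL · w dQ) S K) :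
    AdvError K w dQ = QL K w dQ :=
  advError_eq_QL_of_forall_QL_le_QL_comp fun H hH => hmin (hS K hK H hH)

end

/-- for an OptQL mechanism the adversary error equals the quality loss. -/
theorem optQL_advError_eq_QL [Fintype X] (pr : X → ℝ) (d dQ : X → X → ℝ)
    (K : X → X → ℝ) (hpr : IsPrior pr) (hopt : OptQL pr d dQ K) :
    AdvError K pr dQ = QL K pr dQ := by
  obtain ⟨hK, hpriv, hmin⟩ := hopt
  exact optQL_advError_eq_QL_general (S := {K | IsMechanism K ∧ DPrivate d K})
    (fun _ hL _ hH => ⟨hL.1.comp hH, hL.2.comp hH.1⟩) ⟨hK, hpriv⟩ fun L hL => hmin L hL.1 hL.2
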